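/- arXiv:1708.03924 — 3 statements merged into one kernel-verified Lean document; each statement's English description precedes it below -/
import Mathlib

section
/- Let g be a continuous complex-valued function on the closed unit disk with ‖g‖_∞ = sup_{z∈𝔻}|g(z)| < ∞, and let ψ ∈ L¹(𝕋) be a bounded integrable function on the unit circle. If f : 𝔻 → ℂ satisfies f(z) = P_ψ(z) − G_g(z) for all z ∈ 𝔻 (equivalently, f is twice continuously differentiable with Δf = g in 𝔻 and boundary values ψ), then for every z ∈ 𝔻 one has |f(z) − ((1−|z|²)/(1+|z|²))·(1/(2π))∫₀^{2π} ψ(e^{it}) dt| ≤ (4‖P_ψ‖_∞/π)·arctan|z| + (‖g‖_∞/4)·(1−|z|²), where ‖P_ψ‖_∞ = sup_{z∈𝔻}|P_ψ(z)|. -/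
open Metric MeasureTheory Set Filter

noncomputable section

/-- The Wirtinger derivative `∂f/∂z = (f_x - i f_y)/2`. -/
def wdz (f : ℂ → ℂ) (z : ℂ) : ℂ :=
  (fderiv ℝ f z 1 - Complex.I * fderiv ℝ f z Complex.I) / 2

/-- The Wirtinger derivative `∂f/∂z̄ = (f_x + i f_y)/2`. -/
def wdzbar (f : ℂ → ℂ) (z : ℂ) : ℂ :=
  (fderiv ℝ f z 1 + Complex.I * fderiv ℝ f z Complex.I) / 2

/-- The Laplacian `Δf = f_xx + f_yy` (equivalently `4 f_{z z̄}`). -/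
def lap (f : ℂ → ℂ) (z : ℂ) : ℂ :=
  fderiv ℝ (fun w => fderiv ℝ f w 1) z 1 +
    fderiv ℝ (fun w => fderiv ℝ f w Complex.I) z Complex.I

/-- The Poisson integral `P_ψ(z) = (1/2π) ∫₀^{2π} ((1-|z|²)/|1-z e^{-it}|²) ψ(e^{it}) dt`. -/
def poissonIntegral (ψ : ℂ → ℂ) (z : ℂ) : ℂ :=
  (1 / (2 * Real.pi) : ℝ) • ∫ t in (0:ℝ)..(2 * Real.pi),
    (((1 - ‖z‖ ^ 2) / ‖1 - z * Complex.exp (-(Complex.I * (t : ℂ)))‖ ^ 2 : ℝ) : ℂ) *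
      ψ (Complex.exp (Complex.I * (t : ℂ)))

/-- The Green potential `G_g(z) = (1/2π) ∫_𝔻 log|(1 - z w̄)/(z - w)| g(w) dA(w)`. -/
def greenPotential (g : ℂ → ℂ) (z : ℂ) : ℂ :=
  (1 / (2 * Real.pi) : ℝ) • ∫ w in ball (0:ℂ) 1,
    ((Real.log ‖(1 - z * (starRingEnd ℂ) w) / (z - w)‖ : ℝ) : ℂ) * g w

/-- `sup_{z ∈ 𝔻} |g(z)|`. -/
def supD (g : ℂ → ℂ) : ℝ := sSup ((fun z => ‖g z‖) '' ball (0:ℂ) 1)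

/-- The function `μ(r)` with constant `c` in place of `‖g‖_∞`. -/
def mu (c r : ℝ) : ℝ :=
  c * (1 - r ^ 2) / (8 * r ^ 2) *
    ((1 + r ^ 2) / (1 - r ^ 2) - (1 - r ^ 2) / (2 * r) * Real.log ((1 + r) / (1 - r)))


lemma den_pos {q : ℝ} (hq0 : 0 ≤ q) (hq : q < 1) (t : ℝ) : 0 < 1 + q ^ 2 - 2 * q * Real.cos t := by
  nlinarith [Real.cos_le_one t, sq_pos_of_pos (sub_pos.2 hq)]

lemma ker_deriv {q : ℝ} (hq0 : 0 ≤ q) (hq : q < 1) (t : ℝ) :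
    HasDerivAt (fun t => t + 2 * Real.arctan (q * Real.sin t / (1 - q * Real.cos t)))
      ((1 - q ^ 2) / (1 + q ^ 2 - 2 * q * Real.cos t)) t := by
  have h1 : 0 < 1 - q * Real.cos t := by nlinarith [Real.cos_le_one t]
  have hd := den_pos hq0 hq t
  have hs : HasDerivAt (fun t => q * Real.sin t / (1 - q * Real.cos t))
      ((q * Real.cos t * (1 - q * Real.cos t) - q * Real.sin t * (q * Real.sin t)) /
        (1 - q * Real.cos t) ^ 2) t := by
    refine ((Real.hasDerivAt_sin t).const_mul q).div ?_ h1.ne'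
    have := ((Real.hasDerivAt_cos t).const_mul q).const_sub 1
    simpa using this
  have h := (hasDerivAt_id t).add ((hs.arctan).const_mul 2)
  refine h.congr_deriv ?_
  have hsc := Real.sin_sq_add_cos_sq t
  have e1 : 1 + (q * Real.sin t / (1 - q * Real.cos t)) ^ 2
      = (1 + q ^ 2 - 2 * q * Real.cos t) / (1 - q * Real.cos t) ^ 2 := by
    field_simp
    linear_combination q ^ 2 * hsc
  rw [e1]
  field_simp
  linear_combination (-2 * q ^ 2 ) * hsc

lemma ker_cont {q : ℝ} (hq0 : 0 ≤ q) (hq : q < 1) :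
    Continuous (fun t => (1 - q ^ 2) / (1 + q ^ 2 - 2 * q * Real.cos t)) :=
  Continuous.div (by fun_prop) (by fun_prop) (fun t => (den_pos hq0 hq t).ne')

lemma ker_int {q : ℝ} (hq0 : 0 ≤ q) (hq : q < 1) (a b : ℝ) :
    ∫ t in a..b, ((1 - q ^ 2) / (1 + q ^ 2 - 2 * q * Real.cos t)) =
    (b + 2 * Real.arctan (q * Real.sin b / (1 - q * Real.cos b))) -
    (a + 2 * Real.arctan (q * Real.sin a / (1 - q * Real.cos a))) := by
  rw [intervalIntegral.integral_eq_sub_of_hasDerivAt (fun t _ => ker_deriv hq0 hq t)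
    ((ker_cont hq0 hq).intervalIntegrable _ _)]

lemma ker_abs0 {q : ℝ} (hq0 : 0 ≤ q) (hq : q < 1) :
    ∫ t in (-(Real.pi/2))..(-(Real.pi/2) + 2 * Real.pi), |(1 - q ^ 2) / (1 + q ^ 2 - 2 * q * Real.cos t) -
      (1 - q ^ 2) / (1 + q ^ 2)| = 8 * Real.arctan q := by
  have hpi := Real.pi_pos
  have hc := ker_cont hq0 hq
  have hc' : Continuous (fun t => |(1 - q ^ 2) / (1 + q ^ 2 - 2 * q * Real.cos t) -
      (1 - q ^ 2) / (1 + q ^ 2)|) := by fun_prop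
  have hq2 : 0 ≤ 1 - q ^ 2 := by nlinarith
  rw [← intervalIntegral.integral_add_adjacent_intervals (b := Real.pi / 2)
    (hc'.intervalIntegrable _ _) (hc'.intervalIntegrable _ _)]
  have h1 : ∫ t in (-(Real.pi/2))..(Real.pi/2), |(1 - q ^ 2) / (1 + q ^ 2 - 2 * q * Real.cos t) -
      (1 - q ^ 2) / (1 + q ^ 2)| = ∫ t in (-(Real.pi/2))..(Real.pi/2),
      ((1 - q ^ 2) / (1 + q ^ 2 - 2 * q * Real.cos t) - (1 - q ^ 2) / (1 + q ^ 2)) := by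
    apply intervalIntegral.integral_congr
    intro t ht
    rw [uIcc_of_le (by linarith)] at ht
    have := Real.cos_nonneg_of_mem_Icc ht
    refine abs_of_nonneg (sub_nonneg.2 ?_)
    apply div_le_div_of_nonneg_left hq2 (den_pos hq0 hq t)
    nlinarith [mul_nonneg hq0 this]
  have h2 : ∫ t in (Real.pi/2)..(-(Real.pi/2) + 2 * Real.pi),
      |(1 - q ^ 2) / (1 + q ^ 2 - 2 * q * Real.cos t) -
      (1 - q ^ 2) / (1 + q ^ 2)| = ∫ t in (Real.pi/2)..(-(Real.pi/2) + 2 * Real.pi),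
      ((1 - q ^ 2) / (1 + q ^ 2) - (1 - q ^ 2) / (1 + q ^ 2 - 2 * q * Real.cos t)) := by
    apply intervalIntegral.integral_congr
    intro t ht
    rw [uIcc_of_le (by linarith)] at ht
    have := Real.cos_nonpos_of_pi_div_two_le_of_le ht.1 (by linarith [ht.2])
    have : |(1 - q ^ 2) / (1 + q ^ 2 - 2 * q * Real.cos t) - (1 - q ^ 2) / (1 + q ^ 2)| =
       -((1 - q ^ 2) / (1 + q ^ 2 - 2 * q * Real.cos t) - (1 - q ^ 2) / (1 + q ^ 2)) := by
      refine abs_of_nonpos (sub_nonpos.2 ?_)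
      apply div_le_div_of_nonneg_left hq2 (by positivity)
      nlinarith [mul_nonneg hq0 (neg_nonneg.2 this)]
    simp only [this]; ring
  rw [h1, h2, intervalIntegral.integral_sub (hc.intervalIntegrable _ _) (by simp),
    intervalIntegral.integral_sub (by simp) (hc.intervalIntegrable _ _), ker_int hq0 hq,
    ker_int hq0 hq]
  have e : -(Real.pi/2) + 2 * Real.pi = Real.pi / 2 + Real.pi := by ring
  simp only [intervalIntegral.integral_const, smul_eq_mul, e, Real.sin_neg, Real.cos_neg,
    Real.sin_add_pi, Real.cos_add_pi, Real.sin_pi_div_two, Real.cos_pi_div_two]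
  simp
  ring

lemma ker_abs {q : ℝ} (hq0 : 0 ≤ q) (hq : q < 1) (φ : ℝ) :
    ∫ t in (0:ℝ)..(2 * Real.pi), |(1 - q ^ 2) / (1 + q ^ 2 - 2 * q * Real.cos (t - φ)) -
      (1 - q ^ 2) / (1 + q ^ 2)| = 8 * Real.arctan q := by
  rw [intervalIntegral.integral_comp_sub_right (fun t => |(1 - q ^ 2) / (1 + q ^ 2 - 2 * q * Real.cos t) -
      (1 - q ^ 2) / (1 + q ^ 2)|), ← ker_abs0 hq0 hq]
  have hp : Function.Periodic (fun t => |(1 - q ^ 2) / (1 + q ^ 2 - 2 * q * Real.cos t) -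
      (1 - q ^ 2) / (1 + q ^ 2)|) (2 * Real.pi) := by
    intro t; simp
  rw [← hp.intervalIntegral_add_eq (0 - φ)]
  congr 1; ring

lemma norm_circle_sub (z : ℂ) (R t : ℝ) :
    ‖circleMap 0 R t - z‖ ^ 2 = R ^ 2 + ‖z‖ ^ 2 - 2 * R * ‖z‖ * Real.cos (t - z.arg) := by
  have h1 := Complex.norm_mul_cos_arg z
  have h2 := Complex.norm_mul_sin_arg z
  rw [← Complex.normSq_eq_norm_sq, ← Complex.normSq_eq_norm_sq, Complex.normSq_apply,
    Complex.normSq_apply, Real.cos_sub]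
  simp only [circleMap, zero_add, Complex.sub_re, Complex.sub_im, Complex.re_ofReal_mul,
    Complex.im_ofReal_mul, Complex.exp_ofReal_mul_I_re, Complex.exp_ofReal_mul_I_im]
  linear_combination R ^ 2 * Real.sin_sq_add_cos_sq t + 2 * R * Real.cos t * h1 +
    2 * R * Real.sin t * h2

lemma pk_eq {z : ℂ} {R : ℝ} (hR : 0 < R) (t : ℝ) :
    poissonKernel 0 z (circleMap 0 R t) = (1 - (‖z‖ / R) ^ 2) /
      (1 + (‖z‖ / R) ^ 2 - 2 * (‖z‖ / R) * Real.cos (t - z.arg)) := by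
  rw [poissonKernel_def]
  simp only [sub_zero, norm_circleMap_zero, norm_circle_sub, sq_abs]
  have e1 : 1 - (‖z‖ / R) ^ 2 = (R ^ 2 - ‖z‖ ^ 2) / R ^ 2 := by field_simp
  have e2 : 1 + (‖z‖ / R) ^ 2 - 2 * (‖z‖ / R) * Real.cos (t - z.arg) =
    (R ^ 2 + ‖z‖ ^ 2 - 2 * R * ‖z‖ * Real.cos (t - z.arg)) / R ^ 2 := by field_simp
  rw [e1, e2, div_div_div_cancel_right₀ (by positivity)]

lemma schwarzR {U : ℂ → ℝ} {M R : ℝ} {z : ℂ} (hR : R < 1) (hz : ‖z‖ < R)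
    (hU : InnerProductSpace.HarmonicOnNhd U (ball 0 1)) (hM : ∀ w ∈ ball (0:ℂ) 1, |U w| ≤ M) :
    U z - (1 - (‖z‖ / R) ^ 2) / (1 + (‖z‖ / R) ^ 2) * U 0 ≤
      4 * M / Real.pi * Real.arctan (‖z‖ / R) := by
  have hR0 : 0 < R := (norm_nonneg z).trans_lt hz
  have hsub : closedBall (0:ℂ) R ⊆ ball 0 1 := closedBall_subset_ball hR
  have hq0 : 0 ≤ ‖z‖ / R := by positivity
  have hq : ‖z‖ / R < 1 := by rwa [div_lt_one hR0]
  have hUR : InnerProductSpace.HarmonicOnNhd U (closedBall 0 R) := hU.mono hsub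
  have h1 := hUR.circleAverage_poissonKernel_smul (w := z) (by simpa using hz)
  have h2 := InnerProductSpace.HarmonicOnNhd.circleAverage_eq (f := U) (c := 0) (R := R)
    (by rwa [abs_of_pos hR0])
  have hmem : ∀ t, circleMap 0 R t ∈ ball (0:ℂ) 1 := fun t =>
    hsub (circleMap_mem_closedBall 0 hR0.le t)
  have hUc : Continuous (fun t => U (circleMap 0 R t)) := by
    exact hU.continuousOn.comp_continuous (continuous_circleMap 0 R) hmem
  set q := ‖z‖ / R with hqdef
  have hkc : Continuous (fun t => (1 - q ^ 2) / (1 + q ^ 2 - 2 * q * Real.cos (t - z.arg))) :=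
    (ker_cont hq0 hq).comp (continuous_id.sub continuous_const)
  rw [Real.circleAverage_def] at h1 h2
  simp only [Pi.smul_apply', smul_eq_mul, pk_eq hR0, ← hqdef] at h1 h2
  have hpi := Real.pi_pos
  rw [← h1, ← h2]
  have : (2 * Real.pi)⁻¹ * (∫ t in (0:ℝ)..2 * Real.pi, (1 - q ^ 2) / (1 + q ^ 2 - 2 * q * Real.cos (t - z.arg)) * U (circleMap 0 R t))
    - (1 - q ^ 2) / (1 + q ^ 2) * ((2 * Real.pi)⁻¹ * ∫ t in (0:ℝ)..2 * Real.pi, U (circleMap 0 R t))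
    = (2 * Real.pi)⁻¹ * ∫ t in (0:ℝ)..2 * Real.pi,
      ((1 - q ^ 2) / (1 + q ^ 2 - 2 * q * Real.cos (t - z.arg)) - (1 - q ^ 2) / (1 + q ^ 2)) * U (circleMap 0 R t) := by
    simp only [sub_mul]
    rw [intervalIntegral.integral_sub (by exact (hkc.mul hUc).intervalIntegrable _ _)
      (by exact (continuous_const.mul hUc).intervalIntegrable _ _), intervalIntegral.integral_const_mul]
    ring
  rw [this]
  have h3 : ∫ t in (0:ℝ)..2 * Real.pi,
      ((1 - q ^ 2) / (1 + q ^ 2 - 2 * q * Real.cos (t - z.arg)) - (1 - q ^ 2) / (1 + q ^ 2)) * U (circleMap 0 R t)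
      ≤ ∫ t in (0:ℝ)..2 * Real.pi,
      |(1 - q ^ 2) / (1 + q ^ 2 - 2 * q * Real.cos (t - z.arg)) - (1 - q ^ 2) / (1 + q ^ 2)| * M := by
    apply intervalIntegral.integral_mono_on (by positivity)
    · exact ((hkc.sub continuous_const).mul hUc).intervalIntegrable _ _
    · exact ((hkc.sub continuous_const).abs.mul continuous_const).intervalIntegrable _ _
    · intro t _
      refine (le_abs_self _).trans ?_
      rw [abs_mul]
      exact mul_le_mul_of_nonneg_left (hM _ (hmem t)) (abs_nonneg _)
  rw [intervalIntegral.integral_mul_const, ker_abs hq0 hq] at h3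
  calc _ ≤ (2 * Real.pi)⁻¹ * (8 * Real.arctan q * M) := by gcongr
    _ = _ := by field_simp; ring

lemma schwarz1 {U : ℂ → ℝ} {M : ℝ} {z : ℂ} (hz : ‖z‖ < 1)
    (hU : InnerProductSpace.HarmonicOnNhd U (ball 0 1)) (hM : ∀ w ∈ ball (0:ℂ) 1, |U w| ≤ M) :
    U z - (1 - ‖z‖ ^ 2) / (1 + ‖z‖ ^ 2) * U 0 ≤ 4 * M / Real.pi * Real.arctan ‖z‖ := by
  have hc : ContinuousAt (fun R : ℝ => ‖z‖ / R) 1 :=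
    continuousAt_const.div continuousAt_id one_ne_zero
  have hl : ContinuousAt (fun R : ℝ => U z - (1 - (‖z‖ / R) ^ 2) / (1 + (‖z‖ / R) ^ 2) * U 0) 1 := by
    refine continuousAt_const.sub (ContinuousAt.mul (ContinuousAt.div ?_ ?_ (by positivity))
      continuousAt_const)
    · exact continuousAt_const.sub (hc.pow 2)
    · exact continuousAt_const.add (hc.pow 2)
  have hr : ContinuousAt (fun R : ℝ => 4 * M / Real.pi * Real.arctan (‖z‖ / R)) 1 :=
    continuousAt_const.mul (Real.continuous_arctan.continuousAt.comp hc)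
  have hl' := hl.tendsto.mono_left (nhdsWithin_le_nhds (s := Iio 1))
  have hr' := hr.tendsto.mono_left (nhdsWithin_le_nhds (s := Iio 1))
  have := le_of_tendsto_of_tendsto hl' hr' (by
    filter_upwards [Ioo_mem_nhdsLT hz] with R hR
    exact schwarzR hR.2 hR.1 hU hM)
  simpa using this

lemma poissonIntegral_eq (ψ : ℂ → ℂ) (z : ℂ) :
    poissonIntegral ψ z = Real.circleAverage (fun ζ => poissonKernel 0 z ζ • ψ ζ) 0 1 := by
  rw [poissonIntegral, Real.circleAverage_def, one_div]
  congr 1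
  apply intervalIntegral.integral_congr
  intro t _
  have e : circleMap 0 1 t = Complex.exp (Complex.I * t) := by
    simp [circleMap, mul_comm]
  have e2 : ‖1 - z * Complex.exp (-(Complex.I * (t : ℂ)))‖ = ‖Complex.exp (Complex.I * t) - z‖ := by
    have : Complex.exp (Complex.I * t) - z =
        Complex.exp (Complex.I * t) * (1 - z * Complex.exp (-(Complex.I * (t : ℂ)))) := by
      rw [mul_sub, mul_one, mul_left_comm, ← Complex.exp_add]; simp
    rw [this, norm_mul, mul_comm Complex.I, Complex.norm_exp_ofReal_mul_I, one_mul]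
  have e3 : ‖Complex.exp (Complex.I * t)‖ = 1 := by
    rw [mul_comm, Complex.norm_exp_ofReal_mul_I]
  simp only [e, poissonKernel_def, sub_zero, e2, e3, one_pow, Complex.real_smul]

lemma pk_int {z : ℂ} (hz : ‖z‖ < 1) : Real.circleAverage (poissonKernel 0 z) 0 1 = 1 := by
  have h := InnerProductSpace.HarmonicOnNhd.circleAverage_poissonKernel_smul (f := fun _ => (1:ℝ))
    (c := 0) (R := 1) (w := z) (fun x _ => by simp) (by simpa using hz)
  rw [← h]
  congr 1
  ext w; simp

lemma pk_cont {z : ℂ} (hz : ‖z‖ < 1) : Continuous (fun t => poissonKernel 0 z (circleMap 0 1 t)) := by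
  simp only [pk_eq one_pos, div_one]
  exact (ker_cont (norm_nonneg z) hz).comp (continuous_id.sub continuous_const)

lemma pk_nonneg {z : ℂ} (hz : ‖z‖ < 1) (t : ℝ) : 0 ≤ poissonKernel 0 z (circleMap 0 1 t) := by
  rw [poissonKernel_def]
  simp only [sub_zero, norm_circleMap_zero]
  have : ‖z‖ ^ 2 ≤ 1 := by nlinarith [norm_nonneg z]
  apply div_nonneg
  · simpa using this
  · positivity

lemma poisson_bdd {ψ : ℂ → ℂ} {C : ℝ} (hC : ∀ ζ ∈ sphere (0:ℂ) 1, ‖ψ ζ‖ ≤ C) {z : ℂ} (hz : ‖z‖ < 1) :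
    ‖poissonIntegral ψ z‖ ≤ C := by
  have hpi := Real.pi_pos
  have h1 := pk_int hz
  rw [poissonIntegral_eq, Real.circleAverage_def, norm_smul]
  rw [Real.circleAverage_def] at h1
  have : ‖∫ t in (0:ℝ)..2 * Real.pi, poissonKernel 0 z (circleMap 0 1 t) • ψ (circleMap 0 1 t)‖ ≤
      ∫ t in (0:ℝ)..2 * Real.pi, poissonKernel 0 z (circleMap 0 1 t) * C := by
    apply intervalIntegral.norm_integral_le_of_norm_le (by positivity)
    · refine Filter.Eventually.of_forall (fun t _ => ?_)
      rw [norm_smul, Real.norm_of_nonneg (pk_nonneg hz t)]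
      exact mul_le_mul_of_nonneg_left (hC _ (circleMap_mem_sphere 0 zero_le_one t)) (pk_nonneg hz t)
    · exact ((pk_cont hz).mul continuous_const).intervalIntegrable _ _
  rw [intervalIntegral.integral_mul_const] at this
  rw [Real.norm_of_nonneg (by positivity)]
  calc _ ≤ (2 * Real.pi)⁻¹ * ((∫ t in (0:ℝ)..2 * Real.pi, poissonKernel 0 z (circleMap 0 1 t)) * C) := by gcongr
    _ = ((2 * Real.pi)⁻¹ • (∫ t in (0:ℝ)..2 * Real.pi, poissonKernel 0 z (circleMap 0 1 t))) * C := by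
      rw [smul_eq_mul]; ring
    _ = C := by rw [h1, one_mul]

lemma poisson_part {ψ : ℂ → ℂ}
    (hψint : IntervalIntegrable (fun t : ℝ => ψ (Complex.exp (Complex.I * (t : ℂ))))
      MeasureTheory.volume 0 (2 * Real.pi))
    (hψbdd : ∃ C : ℝ, ∀ ζ ∈ sphere (0:ℂ) 1, ‖ψ ζ‖ ≤ C) {z : ℂ} (hz : ‖z‖ < 1) :
    ‖poissonIntegral ψ z - ((1 - ‖z‖ ^ 2) / (1 + ‖z‖ ^ 2) : ℝ) • poissonIntegral ψ 0‖ ≤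
      4 * supD (poissonIntegral ψ) / Real.pi * Real.arctan ‖z‖ := by
  obtain ⟨C, hC⟩ := hψbdd
  have hci : CircleIntegrable ψ 0 1 := by
    unfold CircleIntegrable
    convert hψint using 3 with t
    simp [circleMap, mul_comm]
  set D := poissonIntegral ψ z - ((1 - ‖z‖ ^ 2) / (1 + ‖z‖ ^ 2) : ℝ) • poissonIntegral ψ 0 with hD
  obtain ⟨l, hl, hlD⟩ : ∃ l : ℂ, ‖l‖ = 1 ∧ l * D = ‖D‖ := by
    by_cases h : D = 0
    · exact ⟨1, by simp, by simp [h]⟩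
    · have hn : (‖D‖ : ℂ) ≠ 0 := by simpa using h
      refine ⟨‖D‖ / D, ?_, by field_simp⟩
      rw [norm_div]; simp [h]
  let L : ℂ →L[ℝ] ℝ := Complex.reCLM.comp ((ContinuousLinearMap.mul ℝ ℂ) l)
  have hL : ∀ w, L w = (l * w).re := fun w => rfl
  have hLn : ∀ w, |L w| ≤ ‖w‖ := fun w => by
    rw [hL]
    refine (Complex.abs_re_le_norm _).trans ?_
    rw [norm_mul, hl, one_mul]
  have hLi : CircleIntegrable (fun ζ => L (ψ ζ)) 0 1 := by
    simp only [CircleIntegrable, intervalIntegrable_iff] at hci ⊢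
    exact L.integrable_comp hci
  have hU : ∀ w ∈ ball (0:ℂ) 1, L (poissonIntegral ψ w) =
      (Real.circleAverage (fun ζ ↦ herglotzRieszKernel 0 w ζ • ((L (ψ ζ) : ℝ) : ℂ)) 0 1).re := by
    intro w hw
    have hwn : ‖w‖ < 1 := by simpa using hw
    rw [re_circleAverage_herglotzRieszKernel_smul hLi hw, ← poissonKernel_eq_re_herglotzRieszKernel,
      poissonIntegral_eq, ← L.circleAverage_comp_comm]
    · congr 1
      ext ζ
      simp only [Function.comp_apply, map_smul, Pi.smul_apply']
    · exact IntervalIntegrable.continuousOn_smul hci (pk_cont hwn).continuousOn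
  have hLi' : CircleIntegrable (fun ζ => ((L (ψ ζ) : ℝ) : ℂ)) 0 1 := by
    simp only [CircleIntegrable, intervalIntegrable_iff] at hLi ⊢
    exact Complex.ofRealCLM.integrable_comp hLi
  have hH : InnerProductSpace.HarmonicOnNhd (fun w => (Real.circleAverage
      (fun ζ ↦ herglotzRieszKernel 0 w ζ • ((L (ψ ζ) : ℝ) : ℂ)) 0 1).re) (ball 0 1) := fun w hw =>
    (analyticOnNhd_circleAverage_herglotzRieszKernel_smul hLi' w hw).harmonicAt_re
  have key := schwarz1 hz hH (M := supD (poissonIntegral ψ)) (by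
    intro w hw
    simp only [← hU w hw]
    refine (hLn _).trans ?_
    refine le_csSup ⟨C, ?_⟩ ⟨w, hw, rfl⟩
    rintro _ ⟨v, hv, rfl⟩
    exact poisson_bdd hC (by simpa using hv))
  simp only [← hU z (by simpa using hz), ← hU 0 (by simp)] at key
  have : ‖D‖ = L D := by rw [hL, hlD]; simp
  rw [this, hD, map_sub, map_smul, smul_eq_mul]
  exact key

/-- Green kernel -/
def gK (z w : ℂ) : ℝ := Real.log ‖(1 - z * (starRingEnd ℂ) w) / (z - w)‖

lemma gK_meas (z : ℂ) : Measurable (gK z) := by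
  unfold gK
  have : Measurable (starRingEnd ℂ) := Complex.continuous_conj.measurable
  fun_prop

lemma conj_norm (z w : ℂ) : ‖1 - z * (starRingEnd ℂ) w‖ = ‖1 - (starRingEnd ℂ) z * w‖ := by
  rw [← Complex.norm_conj]; simp

lemma gK_nonneg {z w : ℂ} (hz : ‖z‖ < 1) (hw : ‖w‖ < 1) : 0 ≤ gK z w := by
  unfold gK
  by_cases h : z = w
  · simp [h]
  have h0 : 0 < ‖z - w‖ := norm_pos_iff.2 (sub_ne_zero.2 h)
  apply Real.log_nonneg
  rw [norm_div, one_le_div h0]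
  refine (sq_le_sq₀ (norm_nonneg _) (norm_nonneg _)).1 ?_
  have e : ‖1 - z * (starRingEnd ℂ) w‖ ^ 2 - ‖z - w‖ ^ 2 = (1 - ‖z‖ ^ 2) * (1 - ‖w‖ ^ 2) := by
    simp only [← Complex.normSq_eq_norm_sq, Complex.normSq_apply]
    simp
    ring
  have h1 : 0 ≤ 1 - ‖z‖ ^ 2 := by nlinarith [norm_nonneg z]
  have h2 : 0 ≤ 1 - ‖w‖ ^ 2 := by nlinarith [norm_nonneg w]
  nlinarith [mul_nonneg h1 h2]

lemma gK_split {z w : ℂ} (hz : ‖z‖ < 1) (hw : ‖w‖ < 1) (h : w ≠ z) :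
    gK z w = Real.log ‖1 - (starRingEnd ℂ) z * w‖ - Real.log ‖w - z‖ := by
  unfold gK
  rw [norm_div, conj_norm, norm_sub_rev z w, Real.log_div]
  · rw [norm_ne_zero_iff, sub_ne_zero]
    intro h'
    have : ‖(starRingEnd ℂ) z * w‖ = 1 := by rw [← h']; simp
    rw [norm_mul, Complex.norm_conj] at this
    nlinarith [norm_nonneg z, norm_nonneg w]
  · exact norm_ne_zero_iff.2 (sub_ne_zero.2 h)

lemma gK_circle_int {z : ℂ} (hz : ‖z‖ < 1) {s : ℝ} (hs0 : 0 < s) (hs1 : s < 1) (hs : s ≠ ‖z‖) :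
    CircleIntegrable (gK z) 0 s ∧ Real.circleAverage (gK z) 0 s = - Real.log (max s ‖z‖) := by
  have hmem : ∀ w ∈ sphere (0:ℂ) |s|, ‖w‖ < 1 ∧ w ≠ z := by
    intro w hw
    have : ‖w‖ = s := by simpa [abs_of_pos hs0] using hw
    exact ⟨by linarith, fun h => hs (by rw [← this, h])⟩
  have heq : EqOn (gK z) ((fun w => Real.log ‖1 - (starRingEnd ℂ) z * w‖) -
      (fun w => Real.log ‖w - z‖)) (sphere (0:ℂ) |s|) := fun w hw =>
    gK_split hz (hmem w hw).1 (hmem w hw).2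
  have hi1 : CircleIntegrable (fun w => Real.log ‖1 - (starRingEnd ℂ) z * w‖) 0 s :=
    MeromorphicOn.circleIntegrable_log_norm (fun z hz ↦ by fun_prop)
  have hi2 : CircleIntegrable (fun w => Real.log ‖w - z‖) 0 s :=
    circleIntegrable_log_norm_sub_const s
  constructor
  · have := hi1.sub hi2
    unfold CircleIntegrable at this ⊢
    refine this.congr ?_
    intro t _
    exact (heq (circleMap_mem_sphere' 0 s t)).symm
  rw [Real.circleAverage_congr_sphere heq, Real.circleAverage_sub hi1 hi2,
    InnerProductSpace.HarmonicOnNhd.circleAverage_eq,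
    circleAverage_log_norm_sub_const_eq_log_radius_add_posLog hs0.ne']
  · simp only [mul_zero, sub_zero, norm_one, Real.log_one, zero_sub, norm_neg]
    congr 1
    rcases lt_or_gt_of_ne hs with h | h
    · rw [max_eq_right h.le, Real.posLog_eq_log, Real.log_mul, Real.log_inv]
      · ring
      · positivity
      · linarith
      · rw [abs_of_nonneg (by positivity), inv_mul_eq_div, one_le_div hs0]; exact h.le
    · rw [max_eq_left h.le, (Real.posLog_eq_zero_iff _).2, add_zero]
      rw [abs_of_nonneg (by positivity), inv_mul_eq_div, div_le_one hs0]; exact h.le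
  · intro w hw
    apply AnalyticAt.harmonicAt_log_norm (by fun_prop)
    have : ‖w‖ ≤ s := by simpa [abs_of_pos hs0] using hw
    rw [sub_ne_zero]
    intro h'
    have : ‖(starRingEnd ℂ) z * w‖ = 1 := by rw [← h']; simp
    rw [norm_mul, Complex.norm_conj] at this
    nlinarith [norm_nonneg z, norm_nonneg w]

lemma inner_int {z : ℂ} (hz : ‖z‖ < 1) {s : ℝ} (hs0 : 0 < s) (hs1 : s < 1) (hs : s ≠ ‖z‖) :
    ∫⁻ θ in Ioo (-Real.pi) Real.pi, ENNReal.ofReal (gK z (circleMap 0 s θ)) =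
      ENNReal.ofReal (2 * Real.pi * (- Real.log (max s ‖z‖))) := by
  have hpi := Real.pi_pos
  obtain ⟨h1, h2⟩ := gK_circle_int hz hs0 hs1 hs
  have hp : Function.Periodic (fun θ => gK z (circleMap 0 s θ)) (2 * Real.pi) := fun t => by
    simp only [periodic_circleMap 0 s t]
  have hi : IntervalIntegrable (fun θ => gK z (circleMap 0 s θ)) volume (-Real.pi) Real.pi :=
    hp.intervalIntegrable₀ (by positivity) h1 _ _
  rw [Real.circleAverage_def] at h2
  rw [← ofReal_integral_eq_lintegral_ofReal]
  · rw [← integral_Ioc_eq_integral_Ioo, ← intervalIntegral.integral_of_le (by linarith)]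
    have := hp.intervalIntegral_add_eq (-Real.pi) 0
    rw [show -Real.pi + 2 * Real.pi = Real.pi by ring, zero_add] at this
    rw [this, ← h2, smul_eq_mul, mul_inv_cancel_left₀ (by positivity)]
  · rw [intervalIntegrable_iff_integrableOn_Ioc_of_le (by linarith)] at hi
    exact hi.mono_set Ioo_subset_Ioc_self
  · refine Eventually.of_forall (fun θ => gK_nonneg hz ?_)
    simpa [abs_of_pos hs0] using hs1

lemma outer_int {r : ℝ} (hr0 : 0 ≤ r) (hr : r < 1) :
    IntervalIntegrable (fun s => s * (2 * Real.pi * (- Real.log (max s r)))) volume 0 1 ∧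
    ∫ s in (0:ℝ)..1, s * (2 * Real.pi * (- Real.log (max s r))) = 2 * Real.pi * ((1 - r ^ 2) / 4) := by
  have hc : Continuous (fun s : ℝ => s * Real.log s) := Real.continuous_mul_log
  have e1 : EqOn (fun s => s * (2 * Real.pi * (- Real.log r)))
      (fun s => s * (2 * Real.pi * (- Real.log (max s r)))) (uIoc 0 r) := by
    intro s hs
    rw [uIoc_of_le hr0] at hs
    simp only [max_eq_right hs.2]
  have e2 : EqOn (fun s => (-2 * Real.pi) * (s * Real.log s))
      (fun s => s * (2 * Real.pi * (- Real.log (max s r)))) (uIoc r 1) := by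
    intro s hs
    rw [uIoc_of_le hr.le] at hs
    simp only [max_eq_left hs.1.le]; ring
  have i1 : IntervalIntegrable (fun s => s * (2 * Real.pi * (- Real.log r))) volume 0 r :=
    Continuous.intervalIntegrable (by fun_prop) _ _
  have i2 : IntervalIntegrable (fun s : ℝ => (-2 * Real.pi) * (s * Real.log s)) volume r 1 :=
    (continuous_const.mul hc).intervalIntegrable _ _
  have j1 := i1.congr e1
  have j2 := i2.congr e2
  refine ⟨j1.trans j2, ?_⟩
  rw [← intervalIntegral.integral_add_adjacent_intervals j1 j2,
    ← intervalIntegral.integral_congr_ae (Eventually.of_forall fun x hx => e1 hx),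
    ← intervalIntegral.integral_congr_ae (Eventually.of_forall fun x hx => e2 hx),
    intervalIntegral.integral_mul_const, intervalIntegral.integral_const_mul, integral_id,
    intervalIntegral.integral_eq_sub_of_hasDerivAt_of_le
      (f := fun s => s * (s * Real.log s) / 2 - s ^ 2 / 4) hr.le]
  · simp; ring
  · exact Continuous.continuousOn (by fun_prop)
  · intro s hs
    have hs0 : s ≠ 0 := (hr0.trans_lt hs.1).ne'
    have := (((hasDerivAt_id s).mul (Real.hasDerivAt_mul_log hs0)).div_const 2).sub
      (((hasDerivAt_id s).pow 2).div_const 4)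
    refine this.congr_deriv ?_
    simp; ring
  · exact hc.intervalIntegrable _ _

lemma green_lint {z : ℂ} (hz : ‖z‖ < 1) :
    ∫⁻ w in ball (0:ℂ) 1, ENNReal.ofReal (gK z w) =
      ENNReal.ofReal (2 * Real.pi * ((1 - ‖z‖ ^ 2) / 4)) := by
  have hcm : ∀ p : ℝ × ℝ, Complex.polarCoord.symm p = circleMap 0 p.1 p.2 := by
    intro p
    rw [Complex.polarCoord_symm_apply, circleMap, Complex.exp_mul_I]; simp
  obtain ⟨hi, ho⟩ := outer_int (norm_nonneg z) hz
  rw [← lintegral_indicator measurableSet_ball, ← Complex.lintegral_comp_polarCoord_symm]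
  simp only [hcm]
  have hm : Measurable (fun w => (ball (0:ℂ) 1).indicator (fun w => ENNReal.ofReal (gK z w)) w) :=
    (gK_meas z).ennreal_ofReal.indicator measurableSet_ball
  have hcm' : Continuous (fun p : ℝ × ℝ => circleMap 0 p.1 p.2) := by
    unfold circleMap; fun_prop
  rw [polarCoord_target, Measure.volume_eq_prod, setLIntegral_prod]
  · rw [← Ioo_union_Ici_eq_Ioi (zero_lt_one (α := ℝ)), lintegral_union measurableSet_Ici
      (Set.disjoint_left.2 fun x hx hx' => not_lt.2 hx' hx.2)]
    have h0 : ∫⁻ s in Ici (1:ℝ), ∫⁻ θ in Ioo (-Real.pi) Real.pi, ENNReal.ofReal (s, θ).1 •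
        (ball (0:ℂ) 1).indicator (fun w => ENNReal.ofReal (gK z w)) (circleMap 0 (s, θ).1 (s, θ).2)
        = 0 := by
      rw [setLIntegral_congr_fun measurableSet_Ici (g := fun _ => 0), lintegral_zero]
      intro s hs
      have hs' : (1:ℝ) ≤ |s| := le_trans hs (le_abs_self s)
      simp [indicator, not_lt.2 hs']
    rw [h0, add_zero, ← ho, intervalIntegral.integral_of_le zero_le_one, integral_Ioc_eq_integral_Ioo,
      ofReal_integral_eq_lintegral_ofReal]
    · apply lintegral_congr_ae
      have hne : ∀ᵐ s : ℝ ∂(volume.restrict (Ioo 0 1)), s ≠ ‖z‖ :=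
        ae_restrict_of_ae (by simp [ae_iff])
      filter_upwards [hne, ae_restrict_mem measurableSet_Ioo] with s hs hs01
      rw [ENNReal.ofReal_mul hs01.1.le, ← inner_int hz hs01.1 hs01.2 hs,
        ← lintegral_const_mul _ (by
          exact ((gK_meas z).comp (continuous_circleMap 0 s).measurable).ennreal_ofReal)]
      apply lintegral_congr
      intro θ
      have : circleMap 0 s θ ∈ ball (0:ℂ) 1 := by simpa [abs_of_pos hs01.1] using hs01.2
      simp only [indicator_of_mem this, smul_eq_mul]
    · rw [intervalIntegrable_iff_integrableOn_Ioc_of_le zero_le_one] at hi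
      exact hi.mono_set Ioo_subset_Ioc_self
    · filter_upwards [ae_restrict_mem measurableSet_Ioo] with s hs
      have hm0 : 0 ≤ max s ‖z‖ := le_max_of_le_left hs.1.le
      have := Real.log_nonpos hm0 (max_le hs.2.le hz.le)
      have hpi := Real.pi_pos
      have h3 := hs.1.le
      have h4 : 0 ≤ -Real.log (max s ‖z‖) := by linarith
      simp only [Pi.zero_apply]
      positivity
  · apply Measurable.aemeasurable
    simp only [smul_eq_mul]
    exact (measurable_fst.ennreal_ofReal).mul (hm.comp hcm'.measurable)

lemma green_part {g : ℂ → ℂ} (hg : ContinuousOn g (closedBall (0:ℂ) 1)) {z : ℂ} (hz : ‖z‖ < 1) :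
    ‖greenPotential g z‖ ≤ supD g / 4 * (1 - ‖z‖ ^ 2) := by
  have hpi := Real.pi_pos
  obtain ⟨C, hC⟩ := (isCompact_closedBall (0:ℂ) 1).exists_bound_of_continuousOn hg
  have hM : ∀ w ∈ ball (0:ℂ) 1, ‖g w‖ ≤ supD g := fun w hw =>
    le_csSup ⟨C, by rintro _ ⟨v, hv, rfl⟩; exact hC v (ball_subset_closedBall hv)⟩ ⟨w, hw, rfl⟩
  have hnn : 0 ≤ᵐ[volume.restrict (ball (0:ℂ) 1)] gK z := by
    filter_upwards [ae_restrict_mem measurableSet_ball] with w hw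
    exact gK_nonneg hz (by simpa using hw)
  have h1 : 0 ≤ 1 - ‖z‖ ^ 2 := by nlinarith [norm_nonneg z]
  have hint : Integrable (gK z) (volume.restrict (ball (0:ℂ) 1)) := by
    refine ⟨(gK_meas z).aestronglyMeasurable, ?_⟩
    rw [hasFiniteIntegral_iff_ofReal hnn, green_lint hz]
    exact ENNReal.ofReal_lt_top
  have hval : ∫ w in ball (0:ℂ) 1, gK z w = 2 * Real.pi * ((1 - ‖z‖ ^ 2) / 4) := by
    rw [integral_eq_lintegral_of_nonneg_ae hnn (gK_meas z).aestronglyMeasurable, green_lint hz,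
      ENNReal.toReal_ofReal (by positivity)]
  have hb : ‖∫ w in ball (0:ℂ) 1, ((gK z w : ℝ) : ℂ) * g w‖ ≤ ∫ w in ball (0:ℂ) 1, gK z w * supD g := by
    apply norm_integral_le_of_norm_le (hint.mul_const _)
    filter_upwards [ae_restrict_mem measurableSet_ball] with w hw
    have hk := gK_nonneg hz (w := w) (by simpa using hw)
    rw [norm_mul, Complex.norm_real, Real.norm_of_nonneg hk]
    exact mul_le_mul_of_nonneg_left (hM w hw) hk
  rw [integral_mul_const, hval] at hb
  unfold greenPotential
  rw [norm_smul, Real.norm_of_nonneg (by positivity)]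
  calc _ ≤ 1 / (2 * Real.pi) * (2 * Real.pi * ((1 - ‖z‖ ^ 2) / 4) * supD g) :=
        mul_le_mul_of_nonneg_left hb (by positivity)
    _ = _ := by field_simp

/-- Schwarz type lemma for solutions of the Poisson equation (Theorem 1.1). -/
theorem stmt0 (g ψ f : ℂ → ℂ)
    (hg : ContinuousOn g (closedBall (0:ℂ) 1))
    (hψint : IntervalIntegrable (fun t : ℝ => ψ (Complex.exp (Complex.I * (t : ℂ))))
      MeasureTheory.volume 0 (2 * Real.pi))
    (hψbdd : ∃ C : ℝ, ∀ ζ ∈ sphere (0:ℂ) 1, ‖ψ ζ‖ ≤ C)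
    (hf : ∀ z ∈ ball (0:ℂ) 1, f z = poissonIntegral ψ z - greenPotential g z) :
    ∀ z ∈ ball (0:ℂ) 1,
      ‖f z - ((1 - ‖z‖ ^ 2) / (1 + ‖z‖ ^ 2) : ℝ) •
          ((1 / (2 * Real.pi) : ℝ) •
            ∫ t in (0:ℝ)..(2 * Real.pi), ψ (Complex.exp (Complex.I * (t : ℂ))))‖ ≤
        4 * supD (poissonIntegral ψ) / Real.pi * Real.arctan ‖z‖ +
          supD g / 4 * (1 - ‖z‖ ^ 2) := by
  intro z hz
  have hz' : ‖z‖ < 1 := by simpa using hz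
  have h0 : (1 / (2 * Real.pi) : ℝ) •
      ∫ t in (0:ℝ)..(2 * Real.pi), ψ (Complex.exp (Complex.I * (t : ℂ))) = poissonIntegral ψ 0 := by
    simp [poissonIntegral]
  rw [h0, hf z hz, sub_right_comm]
  exact (norm_sub_le _ _).trans (add_le_add (poisson_part hψint hψbdd hz') (green_part hg hz'))
end
end

section
/- Let g be a continuous complex-valued function on the closed unit disk with ‖g‖_∞ < 8/(3π). Let f be twice continuously differentiable on 𝔻, continuous on the closed unit disk, mapping 𝔻 into itself (|f(z)| ≤ 1 on 𝔻), satisfying Δf = g on 𝔻, with f(0) = 0. If for some ζ ∈ 𝕋 one has lim_{r→1⁻} |f(rζ)| = 1, then liminf_{r→1⁻} |f(ζ) − f(rζ)|/(1−r) ≥ 2/π − 3‖g‖_∞/4. -/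
open Metric MeasureTheory Set Filter

noncomputable section

/-- one-dim second derivative test -/
lemma aux_second (φ φ' : ℝ → ℝ) (d : ℝ) (h1 : ∀ᶠ t in nhds 0, HasDerivAt φ (φ' t) t)
    (h2 : HasDerivAt φ' d 0) (hm : IsLocalMax φ 0) : d ≤ 0 := by
  by_contra hd
  push Not at hd
  have e1 : deriv φ =ᶠ[nhds 0] φ' := h1.mono fun t ht => ht.deriv
  have e2 : deriv (deriv φ) 0 = d := by rw [e1.deriv_eq]; exact h2.deriv
  have hmin : IsLocalMin φ 0 := isLocalMin_of_deriv_deriv_pos (by rw [e2]; exact hd)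
    (IsLocalMax.deriv_eq_zero hm) h1.self_of_nhds.continuousAt
  have hc : φ =ᶠ[nhds 0] fun _ => φ 0 := by
    filter_upwards [hm, hmin] with t a b using le_antisymm a b
  have : deriv φ =ᶠ[nhds 0] fun _ => 0 := by
    have := hc.deriv
    simpa using this
  have e3 : deriv (deriv φ) 0 = 0 := by rw [this.deriv_eq]; simp
  linarith

lemma aux_pick (x k r D N : ℝ) (hx0 : 0 ≤ x) (hx : x < 1) (hk0 : 0 ≤ k) (hk : k < 1)
    (hr0 : 0 ≤ r) (hr : r < 1) (hN : N ^ 2 ≤ r ^ 2 * D ^ 2)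
    (hid : D ^ 2 - N ^ 2 = (1 - k ^ 2) * (1 - x ^ 2)) (hD : 1 - k * x ≤ D) :
    x ≤ (r + k) / (1 + k * r) := by
  have hkx : k * x < 1 := by nlinarith
  have h0 : (1 - k * x) ^ 2 ≤ D ^ 2 := by
    apply pow_le_pow_left₀ (by linarith) hD
  have h1 : (x - k) ^ 2 ≤ (r * (1 - k * x)) ^ 2 := by
    have : (1 - r ^ 2) * (1 - k * x) ^ 2 ≤ (1 - r ^ 2) * D ^ 2 := by
      apply mul_le_mul_of_nonneg_left h0; nlinarith
    nlinarith
  have h2 : x - k ≤ r * (1 - k * x) := by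
    apply le_of_abs_le
    apply abs_le_of_sq_le_sq h1 
    apply mul_nonneg hr0; linarith
  rw [le_div_iff₀ (by positivity)]
  linarith

lemma aux_mob (K κ : ℂ) : ‖1 - (starRingEnd ℂ) κ * K‖ ^ 2 - ‖K - κ‖ ^ 2
    = (1 - ‖κ‖ ^ 2) * (1 - ‖K‖ ^ 2) := by
  simp only [Complex.sq_norm, Complex.normSq_apply]
  simp
  ring

lemma aux_schwarz_pick (K : ℂ → ℂ) (hK : DifferentiableOn ℂ K (ball 0 1))
    (hb : ∀ z ∈ ball (0:ℂ) 1, ‖K z‖ < 1) (z : ℂ) (hz : z ∈ ball (0:ℂ) 1) :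
    ‖K z‖ ≤ (‖z‖ + ‖K 0‖) / (1 + ‖K 0‖ * ‖z‖) := by
  have h0 : (0:ℂ) ∈ ball (0:ℂ) 1 := by simp
  have hk := hb 0 h0
  set κ := K 0 with hκ
  have hD : ∀ w ∈ ball (0:ℂ) 1, 1 - ‖κ‖ * ‖K w‖ ≤ ‖1 - (starRingEnd ℂ) κ * K w‖ := by
    intro w hw
    have := norm_sub_norm_le (1:ℂ) ((starRingEnd ℂ) κ * K w)
    simpa using this
  have hDpos : ∀ w ∈ ball (0:ℂ) 1, 0 < ‖1 - (starRingEnd ℂ) κ * K w‖ := by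
    intro w hw
    have := hD w hw
    have := hb w hw
    nlinarith [norm_nonneg κ, norm_nonneg (K w)]
  have hS : ‖(K z - κ) / (1 - (starRingEnd ℂ) κ * K z)‖ ≤ ‖z‖ := by
    refine Complex.norm_le_norm_of_mapsTo_ball (f := fun w => (K w - κ) / (1 - (starRingEnd ℂ) κ * K w)) (R := 1) ?_ ?_ ?_ (by simpa using hz)
    · apply DifferentiableOn.div
      · exact hK.sub_const _
      · exact (hK.const_mul _).const_sub _
      · intro w hw; exact norm_pos_iff.1 (hDpos w hw)
    · intro w hw
      simp only [mem_closedBall, dist_zero_right]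
      rw [norm_div, div_le_one (hDpos w hw)]
      have := aux_mob (K w) κ
      have h3 := hb w hw
      apply le_of_sq_le_sq _ (norm_nonneg _)
      have : 0 ≤ (1 - ‖κ‖ ^ 2) * (1 - ‖K w‖ ^ 2) := by
        apply mul_nonneg <;> nlinarith [norm_nonneg κ, norm_nonneg (K w)]
      linarith
    · simp [hκ]
  rw [norm_div, div_le_iff₀ (hDpos z hz)] at hS
  refine aux_pick _ _ _ _ _ (norm_nonneg _) (hb z hz) (norm_nonneg _) hk (norm_nonneg _) (by simpa using hz) ?_ (aux_mob (K z) κ) (hD z hz)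
  rw [← mul_pow]
  exact pow_le_pow_left₀ (norm_nonneg _) hS 2

lemma aux_cos (s : ℝ) : Real.cos (2 * Real.arctan s) = (1 - s ^ 2) / (1 + s ^ 2) := by
  rw [Real.cos_two_mul, Real.cos_sq_arctan]
  have : 1 + s ^ 2 ≠ 0 := by positivity
  field_simp
  ring

lemma aux_strip (F : ℂ → ℂ) (hF : DifferentiableOn ℂ F (ball 0 1))
    (hb : ∀ z ∈ ball (0:ℂ) 1, |(F z).re| < 1) (a : ℝ) (ha0 : 0 ≤ a) (ha : a < 1)
    (hFa : |(F 0).re| ≤ a) (z : ℂ) (hz : z ∈ ball (0:ℂ) 1) :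
    (F z).re ≤ 4 / Real.pi * Real.arctan
      ((‖z‖ + Real.tan (Real.pi / 4 * a)) / (1 + Real.tan (Real.pi / 4 * a) * ‖z‖)) := by
  have hpi := Real.pi_pos
  have h0 : (0:ℂ) ∈ ball (0:ℂ) 1 := by simp
  set τ := Real.tan (Real.pi / 4 * a) with hτ
  have harc : Real.arctan τ = Real.pi / 4 * a := Real.arctan_tan (by nlinarith) (by nlinarith)
  have hτ0 : 0 ≤ τ := Real.tan_nonneg_of_nonneg_of_le_pi_div_two (by positivity) (by nlinarith)
  set E : ℂ → ℂ := fun w => Complex.exp ((Real.pi / 2 : ℝ) * Complex.I * (F w - (F 0).im * Complex.I)) with hE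
  -- squared norms
  have hre : ∀ w, (E w).re = ‖E w‖ * Real.cos (Real.pi / 2 * (F w).re) := by
    intro w
    simp only [hE, Complex.norm_exp, Complex.exp_re]
    simp
  have hsm : ∀ w, ‖E w - 1‖ ^ 2 = ‖E w‖ ^ 2 + 1 - 2 * (E w).re := by
    intro w
    simp only [Complex.sq_norm, Complex.normSq_apply]
    simp; ring
  have hsp : ∀ w, ‖E w + 1‖ ^ 2 = ‖E w‖ ^ 2 + 1 + 2 * (E w).re := by
    intro w
    simp only [Complex.sq_norm, Complex.normSq_apply]
    simp; ring
  have hEpos : ∀ w, 0 < ‖E w‖ := fun w => norm_pos_iff.2 (Complex.exp_ne_zero _)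
  have hrepos : ∀ w ∈ ball (0:ℂ) 1, 0 < (E w).re := by
    intro w hw
    rw [hre]
    have := abs_lt.1 (hb w hw)
    apply mul_pos (hEpos w)
    apply Real.cos_pos_of_mem_Ioo
    constructor <;> nlinarith
  have hppos : ∀ w ∈ ball (0:ℂ) 1, 0 < ‖E w + 1‖ := by
    intro w hw
    have h1 := hsp w
    have h2 := hrepos w hw
    by_contra h
    have : ‖E w + 1‖ = 0 := le_antisymm (not_lt.1 h) (norm_nonneg _)
    rw [this] at h1
    nlinarith [hEpos w]
  set K : ℂ → ℂ := fun w => (E w - 1) / (E w + 1) with hKdef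
  have hEd : DifferentiableOn ℂ E (ball 0 1) := by
    apply DifferentiableOn.cexp
    exact (hF.sub_const _).const_mul _
  have hKn : ∀ w, ‖K w‖ = ‖E w - 1‖ / ‖E w + 1‖ := fun w => norm_div _ _
  have hP := aux_schwarz_pick K ((hEd.sub_const _).div (hEd.add_const _) (fun w hw => norm_pos_iff.1 (hppos w hw))) (by
    intro w hw
    rw [hKn, div_lt_one (hppos w hw)]
    apply lt_of_pow_lt_pow_left₀ 2 (norm_nonneg _)
    rw [hsm, hsp]
    linarith [hrepos w hw]) z hz
  have hz1 : ‖z‖ < 1 := by simpa using hz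
  -- bound on K 0
  have hE0 : ‖E 0‖ = 1 := by
    simp [hE, Complex.norm_exp]
  have hk0 : ‖K 0‖ ≤ τ := by
    rw [hKn, div_le_iff₀ (hppos 0 h0)]
    apply le_of_sq_le_sq _ (by positivity)
    rw [mul_pow, hsm, hsp, hre, hE0]
    have hc : (1 - τ ^ 2) / (1 + τ ^ 2) ≤ Real.cos (Real.pi / 2 * (F 0).re) := by
      rw [← aux_cos, harc, ← Real.cos_abs (Real.pi / 2 * (F 0).re)]
      apply Real.cos_le_cos_of_nonneg_of_le_pi (abs_nonneg _)
      · nlinarith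
      · rw [abs_mul, abs_of_pos (by positivity)]
        nlinarith
    rw [div_le_iff₀ (by positivity)] at hc
    nlinarith
  have hτ1 : τ < 1 := by
    rw [← Real.tan_pi_div_four]
    apply Real.tan_lt_tan_of_lt_of_lt_pi_div_two <;> nlinarith
  set s := (‖z‖ + τ) / (1 + τ * ‖z‖) with hs
  have hs0 : 0 ≤ s := by positivity
  have hKs : ‖K z‖ ≤ s := by
    refine hP.trans ?_
    rw [hs, div_le_div_iff₀ (by positivity) (by positivity)]
    nlinarith [norm_nonneg z, norm_nonneg (K 0), mul_nonneg (sub_nonneg.2 hk0) (sub_nonneg.2 (show ‖z‖ ^ 2 ≤ 1 by nlinarith [norm_nonneg z]))]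
  rw [hKn, div_le_iff₀ (hppos z hz)] at hKs
  have hsq := pow_le_pow_left₀ (norm_nonneg _) hKs 2
  rw [mul_pow, hsm, hsp, hre] at hsq
  by_contra hcon
  push Not at hcon
  have hbz := abs_lt.1 (hb z hz)
  have h2 : 2 * Real.arctan s < Real.pi / 2 * (F z).re := by
    have := mul_lt_mul_of_pos_left hcon (show 0 < Real.pi / 2 by positivity)
    have e : Real.pi / 2 * (4 / Real.pi * Real.arctan s) = 2 * Real.arctan s := by field_simp; norm_num
    linarith
  have h3 := Real.cos_lt_cos_of_nonneg_of_le_pi (by have := Real.arctan_nonneg.2 hs0; positivity) (show Real.pi / 2 * (F z).re ≤ Real.pi by nlinarith) h2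
  rw [aux_cos, lt_div_iff₀ (by positivity)] at h3
  set C := Real.cos (Real.pi / 2 * (F z).re)
  have hs1 : s ≤ 1 := by
    rw [hs, div_le_one (by positivity)]
    nlinarith
  have h4 := mul_lt_mul_of_pos_left h3 (hEpos z)
  nlinarith [mul_nonneg (sq_nonneg (‖E z‖ - 1)) (show 0 ≤ 1 - s ^ 2 by nlinarith)]

lemma aux_approx (φ : ℂ → ℂ) (hφ : ContinuousOn φ (sphere 0 1)) (ε : ℝ) (hε : 0 < ε) :
    ∃ F : ℂ → ℂ, Differentiable ℂ F ∧ ∀ z ∈ sphere (0:ℂ) 1, |(φ z).re - (F z).re| ≤ ε := by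
  have : Fact (0 < 2 * Real.pi) := ⟨by positivity⟩
  let Φ : C(AddCircle (2 * Real.pi), ℂ) :=
    ⟨fun t => φ (AddCircle.toCircle t), by
      apply hφ.comp_continuous
      · exact continuous_subtype_val.comp AddCircle.continuous_toCircle
      · intro t; simpa using Circle.norm_coe (AddCircle.toCircle t)⟩
  have hmem : Φ ∈ (Submodule.span ℂ (range (@fourier (2 * Real.pi)))).topologicalClosure := by
    rw [span_fourier_closure_eq_top]; trivial
  have hmem' : Φ ∈ closure ((Submodule.span ℂ (range (@fourier (2 * Real.pi)))) : Set C(AddCircle (2 * Real.pi), ℂ)) := hmem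
  obtain ⟨p, hp, hd⟩ := Metric.mem_closure_iff.1 hmem' ε hε
  have key : ∀ p ∈ Submodule.span ℂ (range (@fourier (2 * Real.pi))),
      ∃ F G : ℂ → ℂ, Differentiable ℂ F ∧ Differentiable ℂ G ∧
        ∀ t : AddCircle (2 * Real.pi), p t = F (AddCircle.toCircle t) +
          (starRingEnd ℂ) (G (AddCircle.toCircle t)) := by
    intro p hp
    induction hp using Submodule.span_induction with
    | mem x hx =>
      obtain ⟨n, rfl⟩ := hx
      obtain ⟨m, rfl | rfl⟩ := n.eq_nat_or_neg
      · refine ⟨fun z => z ^ m, fun _ => 0, by fun_prop, by fun_prop, fun t => ?_⟩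
        simp [fourier_apply, AddCircle.toCircle_nsmul]
      · refine ⟨fun _ => 0, fun z => z ^ m, by fun_prop, by fun_prop, fun t => ?_⟩
        rw [fourier_neg]
        simp [fourier_apply, AddCircle.toCircle_nsmul]
    | zero => exact ⟨fun _ => 0, fun _ => 0, by fun_prop, by fun_prop, fun t => by simp⟩
    | add x y hx hy ihx ihy =>
      obtain ⟨F, G, hF, hG, h⟩ := ihx
      obtain ⟨F', G', hF', hG', h'⟩ := ihy
      refine ⟨fun z => F z + F' z, fun z => G z + G' z, by fun_prop, by fun_prop, fun t => ?_⟩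
      simp [h, h']; ring
    | smul a x hx ih =>
      obtain ⟨F, G, hF, hG, h⟩ := ih
      refine ⟨fun z => a * F z, fun z => (starRingEnd ℂ) a * G z, by fun_prop, by fun_prop, fun t => ?_⟩
      simp [h]; ring
  obtain ⟨F, G, hF, hG, h⟩ := key p hp
  refine ⟨fun z => F z + G z, by fun_prop, fun z hz => ?_⟩
  obtain ⟨t, ht⟩ : ∃ t : AddCircle (2 * Real.pi), (AddCircle.toCircle t : ℂ) = z := by
    have hz' : ‖z‖ = 1 := by simpa using hz
    refine ⟨((Complex.arg z : ℝ) : AddCircle (2 * Real.pi)), ?_⟩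
    rw [AddCircle.toCircle_apply_mk, Circle.coe_exp]
    have := Complex.norm_mul_exp_arg_mul_I z
    rw [hz'] at this
    simpa using this
  have h1 : ‖Φ t - p t‖ ≤ ε := by
    rw [← dist_eq_norm]
    exact (ContinuousMap.dist_apply_le_dist t).trans hd.le
  have h2 := (Complex.abs_re_le_norm (Φ t - p t)).trans h1
  have h3 : Φ t = φ z := by simp [Φ, ht]
  rw [h3, h, ht] at h2
  simpa using h2

def AuxD2 (u : ℂ → ℝ) (z e : ℂ) (d : ℝ) : Prop :=
  ∃ φ' : ℝ → ℝ, (∀ᶠ t : ℝ in nhds 0, HasDerivAt (fun t : ℝ => u (z + t * e)) (φ' t) t) ∧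
    HasDerivAt φ' d 0

lemma AuxD2.add {u v : ℂ → ℝ} {z e : ℂ} {c d : ℝ} (hu : AuxD2 u z e c) (hv : AuxD2 v z e d) :
    AuxD2 (fun w => u w + v w) z e (c + d) := by
  obtain ⟨p, hp, hp'⟩ := hu
  obtain ⟨q, hq, hq'⟩ := hv
  refine ⟨fun t => p t + q t, ?_, hp'.add hq'⟩
  filter_upwards [hp, hq] with t h1 h2 using h1.add h2

lemma aux_line (z e : ℂ) (t : ℝ) : HasDerivAt (fun t : ℝ => z + t * e) e t := by
  have := ((Complex.ofRealCLM.hasDerivAt (x := t)).mul_const e).const_add z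
  simpa using this

lemma auxD2_sq (k : ℝ) (z e : ℂ) (he : ‖e‖ = 1) : AuxD2 (fun w => k * ‖w‖ ^ 2) z e (2 * k) := by
  have h1 : ∀ t : ℝ, k * ‖z + t * e‖ ^ 2 = k * (‖z‖ ^ 2 + 2 * t * (z.re * e.re + z.im * e.im) + t ^ 2) := by
    intro t
    have : e.re * e.re + e.im * e.im = 1 := by
      rw [← Complex.normSq_apply, ← Complex.sq_norm, he]; norm_num
    simp only [Complex.sq_norm, Complex.normSq_apply]
    simp
    left
    linear_combination t ^ 2 * this
  refine ⟨fun t => k * (2 * (z.re * e.re + z.im * e.im) + 2 * t), ?_, ?_⟩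
  · refine Eventually.of_forall fun t => ?_
    simp_rw [h1]
    apply HasDerivAt.const_mul
    have := (((hasDerivAt_id t).const_mul 2).mul_const (z.re * e.re + z.im * e.im)).const_add (‖z‖ ^ 2) |>.add (hasDerivAt_pow 2 t)
    refine HasDerivAt.congr_deriv this ?_
    simp
  · have := ((((hasDerivAt_id (0:ℝ)).const_mul 2).const_add (2 * (z.re * e.re + z.im * e.im)))).const_mul k
    refine HasDerivAt.congr_deriv this ?_
    ring

lemma auxD2_hol (F : ℂ → ℂ) (hF : Differentiable ℂ F) (z e : ℂ) :
    AuxD2 (fun w => (F w).re) z e ((deriv (deriv F) z * e * e).re) := by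
  have hF' : Differentiable ℂ (deriv F) := fun w => (hF.analyticAt w).deriv.differentiableAt
  have gen : ∀ (H : ℂ → ℂ) (t : ℝ), Differentiable ℂ H → HasDerivAt (fun t : ℝ => H (z + t * e)) (deriv H (z + t * e) * e) t := by
    intro H t hH
    exact ((hH (z + t * e)).hasDerivAt).comp_of_eq t (aux_line z e t) rfl
  refine ⟨fun t => (deriv F (z + t * e) * e).re, Eventually.of_forall fun t => ?_, ?_⟩
  · have := Complex.reCLM.hasFDerivAt.comp_hasDerivAt t (gen F t hF)
    simpa [Function.comp_def] using this
  · have := Complex.reCLM.hasFDerivAt.comp_hasDerivAt 0 ((gen _ 0 hF').mul_const e)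
    simpa [Function.comp_def] using this

lemma auxD2_f (f : ℂ → ℂ) (hf : ContDiffOn ℝ 2 f (ball 0 1)) (c z e : ℂ) (hz : z ∈ ball (0:ℂ) 1) :
    AuxD2 (fun w => (c * f w).re) z e ((c * fderiv ℝ (fun w => fderiv ℝ f w e) z e).re) := by
  have hd : ∀ w ∈ ball (0:ℂ) 1, DifferentiableAt ℝ f w := fun w hw =>
    (hf.differentiableOn (by norm_num)).differentiableAt (isOpen_ball.mem_nhds hw)
  have hd2 : DifferentiableAt ℝ (fun w => fderiv ℝ f w e) z := by
    have h1 : ContDiffAt ℝ 2 f z := hf.contDiffAt (isOpen_ball.mem_nhds hz)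
    have h2 : ContDiffAt ℝ 1 (fderiv ℝ f) z := h1.fderiv_right (by norm_num)
    have h3 := h2.differentiableAt (by norm_num)
    exact h3.clm_apply (differentiableAt_const e)
  have hcont : Tendsto (fun t : ℝ => z + t * e) (nhds 0) (nhds z) := by
    have := (aux_line z e 0).continuousAt.tendsto
    simpa using this
  refine ⟨fun t => (c * fderiv ℝ f (z + t * e) e).re, ?_, ?_⟩
  · filter_upwards [hcont (isOpen_ball.mem_nhds hz)] with t ht
    have h := ((hd _ ht).hasFDerivAt).comp_hasDerivAt t (aux_line z e t)
    have := Complex.reCLM.hasFDerivAt.comp_hasDerivAt t (h.const_mul c)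
    simpa [Function.comp_def] using this
  · have h := HasFDerivAt.comp_hasDerivAt_of_eq (x := (0:ℝ)) (y := z) (hl := hd2.hasFDerivAt) (hf := aux_line z e 0) (by simp)
    have := Complex.reCLM.hasFDerivAt.comp_hasDerivAt 0 (h.const_mul c)
    simpa [Function.comp_def] using this

lemma aux_max (u : ℂ → ℝ) (hc : ContinuousOn u (closedBall 0 1)) (C : ℝ)
    (hb : ∀ z ∈ sphere (0:ℂ) 1, u z ≤ C)
    (hL : ∀ z ∈ ball (0:ℂ) 1, ∃ d1 d2, AuxD2 u z 1 d1 ∧ AuxD2 u z Complex.I d2 ∧ 0 ≤ d1 + d2)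
    (z : ℂ) (hz : z ∈ ball (0:ℂ) 1) : u z ≤ C := by
  apply le_of_forall_pos_le_add
  intro δ hδ
  have hc' : ContinuousOn (fun w => u w + δ * ‖w‖ ^ 2) (closedBall 0 1) := by fun_prop
  obtain ⟨m, hm, hmax⟩ := (isCompact_closedBall (0:ℂ) 1).exists_isMaxOn ⟨0, by simp⟩ hc'
  have hzm := hmax (ball_subset_closedBall hz)
  simp only [mem_ofPred_eq] at hzm
  have hms : m ∈ sphere (0:ℂ) 1 := by
    by_contra hns
    have hmb : m ∈ ball (0:ℂ) 1 := by
      simp only [mem_closedBall, mem_sphere, mem_ball] at *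
      exact lt_of_le_of_ne hm hns
    obtain ⟨d1, d2, h1, h2, h3⟩ := hL m hmb
    have loc : ∀ e : ℂ, IsLocalMax (fun t : ℝ => u (m + t * e) + δ * ‖m + t * e‖ ^ 2) 0 := by
      intro e
      have hcont : Tendsto (fun t : ℝ => m + t * e) (nhds 0) (nhds m) := by
        have := (aux_line m e 0).continuousAt.tendsto
        simpa using this
      filter_upwards [hcont (isOpen_ball.mem_nhds hmb)] with t ht
      have := hmax (ball_subset_closedBall ht)
      simpa using this
    have app : ∀ e d, ‖e‖ = 1 → AuxD2 u m e d → d + 2 * δ ≤ 0 := by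
      intro e d he hd
      obtain ⟨p, hp, hp'⟩ := hd.add (auxD2_sq δ m e he)
      exact aux_second _ p _ hp hp' (loc e)
    have := app _ _ (by simp) h1
    have := app _ _ (by simp) h2
    linarith
  have := hb m hms
  have hm1 : ‖m‖ = 1 := by simpa using hms
  rw [hm1] at hzm
  have : 0 ≤ δ * ‖z‖ ^ 2 := by positivity
  linarith

lemma aux_hol_max (F : ℂ → ℂ) (hF : Differentiable ℂ F) (C : ℝ)
    (hb : ∀ z ∈ sphere (0:ℂ) 1, (F z).re ≤ C) (z : ℂ) (hz : z ∈ ball (0:ℂ) 1) : (F z).re ≤ C := by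
  refine aux_max (fun w => (F w).re) ?_ C hb ?_ z hz
  · exact (Complex.continuous_re.comp hF.continuous).continuousOn
  · intro w hw
    refine ⟨_, _, auxD2_hol F hF w 1, auxD2_hol F hF w Complex.I, ?_⟩
    simp [mul_assoc]

lemma aux_comp (f g F : ℂ → ℂ) (M ε : ℝ)
    (hf2 : ContDiffOn ℝ 2 f (ball (0:ℂ) 1))
    (hfc : ContinuousOn f (closedBall (0:ℂ) 1))
    (hfg : ∀ z ∈ ball (0:ℂ) 1, lap f z = g z)
    (hgM : ∀ z ∈ ball (0:ℂ) 1, ‖g z‖ ≤ M) (c : ℂ) (hc : ‖c‖ ≤ 1) (hF : Differentiable ℂ F)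
    (hb : ∀ z ∈ sphere (0:ℂ) 1, (c * f z).re - (F z).re ≤ ε)
    (z : ℂ) (hz : z ∈ ball (0:ℂ) 1) : (c * f z).re - (F z).re ≤ ε + M / 4 * (1 - ‖z‖ ^ 2) := by
  have hcF := hF.continuous
  have := aux_max (fun w => (c * f w).re + ((-F w).re + M / 4 * ‖w‖ ^ 2)) ?_ (ε + M / 4) ?_ ?_ z hz
  · simp only [Complex.neg_re] at this
    linarith
  · apply ContinuousOn.add
    · exact Complex.continuous_re.comp_continuousOn (continuousOn_const.mul hfc)
    · apply Continuous.continuousOn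
      exact (Complex.continuous_re.comp hcF.neg).add (by fun_prop)
  · intro w hw
    have h1 := hb w hw
    have hm1 : ‖w‖ = 1 := by simpa using hw
    rw [hm1]
    simp only [Complex.neg_re]
    linarith
  · intro w hw
    refine ⟨_, _, (auxD2_f f hf2 c w 1 hw).add ((auxD2_hol _ hF.neg w 1).add (auxD2_sq (M / 4) w 1 (by simp))),
      (auxD2_f f hf2 c w Complex.I hw).add ((auxD2_hol _ hF.neg w Complex.I).add (auxD2_sq (M / 4) w Complex.I (by simp))), ?_⟩
    have e1 : (c * g w).re = (c * fderiv ℝ (fun w => fderiv ℝ f w 1) w 1).re + (c * fderiv ℝ (fun w => fderiv ℝ f w Complex.I) w Complex.I).re := by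
      rw [← hfg w hw, lap, mul_add, Complex.add_re]
    have e2 : |(c * g w).re| ≤ M := by
      refine (Complex.abs_re_le_norm _).trans ?_
      rw [norm_mul]
      have := hgM w hw
      nlinarith [norm_nonneg c, norm_nonneg (g w)]
    have e3 := (abs_le.1 e2).1
    have e4 : ∀ x : ℂ, (x * 1 * 1).re + (x * Complex.I * Complex.I).re = 0 := by
      intro x; simp [mul_assoc]
    have e5 := e4 (deriv (deriv (-F)) w)
    have e6 : (-F) = fun w => - F w := rfl
    linarith

lemma aux_bound (f g : ℂ → ℂ) (M : ℝ) (hM0 : 0 ≤ M) (hM : M < 4)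
    (hf2 : ContDiffOn ℝ 2 f (ball (0:ℂ) 1))
    (hfc : ContinuousOn f (closedBall (0:ℂ) 1))
    (hfg : ∀ z ∈ ball (0:ℂ) 1, lap f z = g z)
    (hgM : ∀ z ∈ ball (0:ℂ) 1, ‖g z‖ ≤ M) (c : ℂ) (hc : ‖c‖ ≤ 1)
    (hfb : ∀ z ∈ closedBall (0:ℂ) 1, ‖f z‖ ≤ 1) (hf0 : f 0 = 0)
    (z : ℂ) (hz : z ∈ ball (0:ℂ) 1) :
    (c * f z).re ≤ M / 4 * (1 - ‖z‖ ^ 2) + 4 / Real.pi * Real.arctan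
      ((‖z‖ + Real.tan (Real.pi / 4 * (M / 4))) / (1 + Real.tan (Real.pi / 4 * (M / 4)) * ‖z‖)) := by
  have hpi := Real.pi_pos
  have h0 : (0:ℂ) ∈ ball (0:ℂ) 1 := by simp
  have step : ∀ ε : ℝ, 0 < ε → M / 4 + ε < 1 → (c * f z).re ≤ ε + M / 4 * (1 - ‖z‖ ^ 2) +
      (1 + 2 * ε) * (4 / Real.pi * Real.arctan
      ((‖z‖ + Real.tan (Real.pi / 4 * (M / 4 + ε))) / (1 + Real.tan (Real.pi / 4 * (M / 4 + ε)) * ‖z‖))) := by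
    intro ε hε hε1
    obtain ⟨F, hF, hFb⟩ := aux_approx (fun w => c * f w)
      (continuousOn_const.mul (hfc.mono sphere_subset_closedBall)) ε hε
    have hup := aux_comp f g F M ε hf2 hfc hfg hgM c hc hF (fun w hw => (abs_le.1 (hFb w hw)).2)
    have hdn := aux_comp f g (fun w => - F w) M ε hf2 hfc hfg hgM (-c) (by simpa using hc) hF.neg
      (fun w hw => by
        have := (abs_le.1 (hFb w hw)).1
        simp only [neg_mul, Complex.neg_re] at *
        linarith)
    have hus : ∀ w ∈ sphere (0:ℂ) 1, |(F w).re| ≤ 1 + ε := by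
      intro w hw
      have h1 := abs_le.1 (hFb w hw)
      have h2 : |(c * f w).re| ≤ 1 := by
        refine (Complex.abs_re_le_norm _).trans ?_
        rw [norm_mul]
        have := hfb w (sphere_subset_closedBall hw)
        nlinarith [norm_nonneg c, norm_nonneg (f w)]
      have h3 := abs_le.1 h2
      rw [abs_le]
      constructor <;> linarith
    have hB1 := aux_hol_max F hF (1 + ε) (fun w hw => (abs_le.1 (hus w hw)).2)
    have hB2 := aux_hol_max (fun w => - F w) hF.neg (1 + ε) (fun w hw => by
      have := (abs_le.1 (hus w hw)).1
      rw [Complex.neg_re]; linarith)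
    have hk : 0 < 1 + 2 * ε := by linarith
    have hre : ∀ w, (F w / ((1 + 2 * ε : ℝ) : ℂ)).re = (F w).re / (1 + 2 * ε) :=
      fun w => Complex.div_ofReal_re _ _
    have hS := aux_strip (fun w => F w / ((1 + 2 * ε : ℝ) : ℂ)) (hF.div_const _).differentiableOn
      (fun w hw => by
        have h1 := hB1 w hw
        have h2 := hB2 w hw
        rw [Complex.neg_re] at h2
        simp only [hre]
        rw [abs_div, abs_of_pos hk, div_lt_one hk, abs_lt]
        constructor <;> linarith) (M / 4 + ε) (by positivity) hε1
      (by
        have h1 := hup 0 h0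
        have h2 := hdn 0 h0
        simp only [hf0, mul_zero, Complex.zero_re, norm_zero, Complex.neg_re] at h1 h2
        simp only [hre]
        rw [abs_div, abs_of_pos hk]
        refine (div_le_self (abs_nonneg _) (by linarith)).trans ?_
        rw [abs_le]
        constructor <;> linarith) z hz
    simp only [hre] at hS
    rw [div_le_iff₀ hk] at hS
    have := hup z hz
    linarith
  set x := Real.pi / 4 * (M / 4) with hx
  have hx0 : 0 ≤ x := by positivity
  have hx1 : x < Real.pi / 2 := by nlinarith
  have hcos : Real.cos x ≠ 0 := (Real.cos_pos_of_mem_Ioo ⟨by linarith, hx1⟩).ne'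
  have htan : 0 ≤ Real.tan x := Real.tan_nonneg_of_nonneg_of_le_pi_div_two hx0 hx1.le
  have hT : ContinuousAt (fun ε : ℝ => Real.tan (Real.pi / 4 * (M / 4 + ε))) 0 := by
    apply ContinuousAt.comp (g := Real.tan)
    · simp only [add_zero]; exact Real.continuousAt_tan.2 hcos
    · fun_prop
  have hC : ContinuousAt (fun ε : ℝ => ε + M / 4 * (1 - ‖z‖ ^ 2) +
      (1 + 2 * ε) * (4 / Real.pi * Real.arctan
      ((‖z‖ + Real.tan (Real.pi / 4 * (M / 4 + ε))) / (1 + Real.tan (Real.pi / 4 * (M / 4 + ε)) * ‖z‖)))) 0 := by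
    apply ContinuousAt.add (by fun_prop)
    apply ContinuousAt.mul (by fun_prop)
    apply ContinuousAt.mul (by fun_prop)
    apply Real.continuous_arctan.continuousAt.comp
    apply ContinuousAt.div
    · exact continuousAt_const.add hT
    · exact continuousAt_const.add (hT.mul continuousAt_const)
    · simp only [add_zero]
      have : 0 < 1 + Real.tan x * ‖z‖ := by positivity
      exact this.ne'
  have hlim := hC.tendsto.mono_left (nhdsWithin_le_nhds (s := Ioi (0:ℝ)))
  have := ge_of_tendsto hlim (b := (c * f z).re) (by
    have h1 : Iio (1 - M / 4) ∈ nhdsWithin (0:ℝ) (Ioi 0) :=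
      mem_nhdsWithin_of_mem_nhds (Iio_mem_nhds (by linarith))
    filter_upwards [self_mem_nhdsWithin, h1] with ε h2 h3
    exact step ε h2 (by have : ε < 1 - M / 4 := h3
                        linarith))
  simpa using this

lemma aux_tan (x : ℝ) (hx0 : 0 ≤ x) (hx : x < Real.pi / 2) :
    1 - 2 * x ≤ (1 - Real.tan x) / (1 + Real.tan x) := by
  have hc := Real.cos_pos_of_mem_Ioo (x := x) ⟨by linarith, hx⟩
  have hs := Real.sin_nonneg_of_nonneg_of_le_pi hx0 (by linarith [Real.pi_pos])
  have h1 := Real.sin_le hx0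
  have h2 := Real.sin_sq_add_cos_sq x
  have h3 : 1 ≤ Real.cos x + Real.sin x := by nlinarith [mul_nonneg hc.le hs]
  have ht : Real.tan x ≤ x * (1 + Real.tan x) := by
    rw [Real.tan_eq_sin_div_cos, div_le_iff₀ hc]
    have : x * (1 + Real.sin x / Real.cos x) * Real.cos x = x * (Real.cos x + Real.sin x) := by
      field_simp
    rw [this]
    nlinarith
  have ht0 : 0 ≤ Real.tan x := Real.tan_nonneg_of_nonneg_of_le_pi_div_two hx0 hx.le
  rw [le_div_iff₀ (by positivity)]
  linarith

lemma aux_asym (M τ : ℝ) (hτ0 : 0 ≤ τ) :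
    Tendsto (fun r : ℝ => (1 - (M / 4 * (1 - r ^ 2) + 4 / Real.pi * Real.arctan
      ((r + τ) / (1 + τ * r)))) / (1 - r)) (nhdsWithin 1 (Iio 1))
      (nhds (2 / Real.pi * ((1 - τ) / (1 + τ)) - M / 2)) := by
  have hpi := Real.pi_pos
  have hne : (1 + τ : ℝ) ≠ 0 := by positivity
  have hq : HasDerivAt (fun r : ℝ => (r + τ) / (1 + τ * r)) ((1 - τ) / (1 + τ)) 1 := by
    have := ((hasDerivAt_id (1:ℝ)).add_const τ).div (((hasDerivAt_id (1:ℝ)).const_mul τ).const_add 1) (by simpa using hne)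
    refine this.congr_deriv ?_
    simp only [id]
    field_simp
  have hv : (1 + τ) / (1 + τ * 1) = 1 := by rw [mul_one]; exact div_self hne
  have hp : HasDerivAt (fun r : ℝ => M / 4 * (1 - r ^ 2)) (-(M / 2)) 1 := by
    refine (((hasDerivAt_pow 2 (1:ℝ)).const_sub 1).const_mul (M / 4)).congr_deriv ?_
    norm_num; ring
  have hB : HasDerivAt (fun r : ℝ => (M / 4 * (1 - r ^ 2) + 4 / Real.pi * Real.arctan
      ((r + τ) / (1 + τ * r)))) (2 / Real.pi * ((1 - τ) / (1 + τ)) - M / 2) 1 := by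
    refine (hp.add ((hq.arctan).const_mul (4 / Real.pi))).congr_deriv ?_
    rw [hv]
    field_simp
    ring
  have hs := hB.tendsto_slope.mono_left (nhdsWithin_mono 1 (show Iio (1:ℝ) ⊆ {1}ᶜ from fun r hr => ne_of_lt hr))
  refine hs.congr' ?_
  filter_upwards [self_mem_nhdsWithin] with r hr
  have hr : r < 1 := hr
  have h1 : r - 1 ≠ 0 := by linarith
  have h2 : 1 - r ≠ 0 := by linarith
  rw [slope_def_field, hv, Real.arctan_one]
  have e : M / 4 * (1 - 1 ^ 2) + 4 / Real.pi * (Real.pi / 4) = 1 := by field_simp; ring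
  rw [e, ← neg_div_neg_eq]
  congr 1 <;> ring

/-- Boundary Schwarz lemma for solutions of the Poisson equation (Theorem 1.3). -/
theorem stmt2 (g f : ℂ → ℂ)
    (hg : ContinuousOn g (closedBall (0:ℂ) 1))
    (hgnorm : supD g < 8 / (3 * Real.pi))
    (hf2 : ContDiffOn ℝ 2 f (ball (0:ℂ) 1))
    (hfc : ContinuousOn f (closedBall (0:ℂ) 1))
    (hfg : ∀ z ∈ ball (0:ℂ) 1, lap f z = g z)
    (hfb : ∀ z ∈ ball (0:ℂ) 1, ‖f z‖ ≤ 1)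
    (hf0 : f 0 = 0)
    (ζ : ℂ) (hζ : ζ ∈ sphere (0:ℂ) 1)
    (hlim : Filter.Tendsto (fun r : ℝ => ‖f ((r : ℂ) * ζ)‖)
      (nhdsWithin 1 (Set.Iio 1)) (nhds 1)) :
    ((2 / Real.pi - 3 * supD g / 4 : ℝ) : EReal) ≤
      Filter.liminf (fun r : ℝ => ((‖f ζ - f ((r : ℂ) * ζ)‖ / (1 - r) : ℝ) : EReal))
        (nhdsWithin 1 (Set.Iio 1)) := by
  have hpi := Real.pi_pos
  set M := supD g with hMdef
  have hbdd : BddAbove ((fun z => ‖g z‖) '' ball (0:ℂ) 1) := by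
    have := (isCompact_closedBall (0:ℂ) 1).bddAbove_image hg.norm
    exact this.mono (image_mono ball_subset_closedBall)
  have hgM : ∀ z ∈ ball (0:ℂ) 1, ‖g z‖ ≤ M := fun z hz => le_csSup hbdd ⟨z, hz, rfl⟩
  have hM0 : 0 ≤ M := (norm_nonneg _).trans (hgM 0 (by simp))
  have hM4 : M < 4 := by
    refine hgnorm.trans ?_
    rw [div_lt_iff₀ (by positivity)]
    nlinarith [Real.pi_gt_three]
  have hζ1 : ‖ζ‖ = 1 := by simpa using hζ
  have hfb' : ∀ z ∈ closedBall (0:ℂ) 1, ‖f z‖ ≤ 1 := by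
    intro z hz
    have hcl : closure (ball (0:ℂ) 1) = closedBall 0 1 := closure_ball _ one_ne_zero
    rw [← hcl] at hz
    have := hfc.norm
    rw [← hcl] at this
    exact le_on_closure hfb this continuousOn_const hz
  have hnr : ∀ r : ℝ, 0 < r → ‖(r : ℂ) * ζ‖ = r := by
    intro r hr
    rw [norm_mul, hζ1, mul_one, Complex.norm_real, Real.norm_of_nonneg hr.le]
  have hev : ∀ᶠ r : ℝ in nhdsWithin 1 (Iio 1), 0 < r ∧ r < 1 := by
    have h1 : Ioi (0:ℝ) ∈ nhdsWithin (1:ℝ) (Iio 1) :=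
      mem_nhdsWithin_of_mem_nhds (Ioi_mem_nhds (by norm_num))
    filter_upwards [self_mem_nhdsWithin, h1] with r h2 h3 using ⟨h3, h2⟩
  have hf1 : ‖f ζ‖ = 1 := by
    have hcont : Tendsto (fun r : ℝ => (r : ℂ) * ζ) (nhdsWithin 1 (Iio 1)) (nhdsWithin ζ (closedBall 0 1)) := by
      rw [tendsto_nhdsWithin_iff]
      constructor
      · have : ContinuousAt (fun r : ℝ => (r : ℂ) * ζ) 1 := by fun_prop
        have h := this.tendsto.mono_left (nhdsWithin_le_nhds (s := Iio (1:ℝ)))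
        simpa using h
      · filter_upwards [hev] with r hr
        rw [mem_closedBall, dist_zero_right, hnr r hr.1]
        exact hr.2.le
    have h1 := ((hfc.norm ζ (sphere_subset_closedBall hζ)).tendsto).comp hcont
    exact tendsto_nhds_unique h1 hlim
  set c := (starRingEnd ℂ) (f ζ) with hc
  have hcn : ‖c‖ = 1 := by rw [hc, RCLike.norm_conj, hf1]
  have hcf : (c * f ζ).re = 1 := by
    rw [hc, mul_comm, Complex.mul_conj, Complex.normSq_eq_norm_sq, hf1]; norm_num
  set τ := Real.tan (Real.pi / 4 * (M / 4)) with hτ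
  have hx1 : Real.pi / 4 * (M / 4) < Real.pi / 2 := by nlinarith
  have hx0 : 0 ≤ Real.pi / 4 * (M / 4) := by positivity
  have hτ0 : 0 ≤ τ := Real.tan_nonneg_of_nonneg_of_le_pi_div_two hx0 hx1.le
  have hasym := aux_asym M τ hτ0
  have hle : 2 / Real.pi - 3 * M / 4 ≤ 2 / Real.pi * ((1 - τ) / (1 + τ)) - M / 2 := by
    have h := mul_le_mul_of_nonneg_left (aux_tan _ hx0 hx1) (show 0 ≤ 2 / Real.pi by positivity)
    have e : 2 / Real.pi * (1 - 2 * (Real.pi / 4 * (M / 4))) = 2 / Real.pi - M / 4 := by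
      field_simp; ring
    rw [e] at h
    linarith
  have hE := (continuous_coe_real_ereal.tendsto _).comp hasym
  refine (EReal.coe_le_coe_iff.2 hle).trans ?_
  rw [← hE.liminf_eq]
  refine liminf_le_liminf ?_
  filter_upwards [hev] with r hr
  simp only [Function.comp]
  rw [EReal.coe_le_coe_iff]
  apply div_le_div_of_nonneg_right _ (by linarith [hr.2])
  have hn := hnr r hr.1
  have hb := aux_bound f g M hM0 hM4 hf2 hfc hfg hgM c hcn.le hfb' hf0 ((r : ℂ) * ζ)
    (by rw [mem_ball, dist_zero_right, hn]; exact hr.2)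
  rw [hn] at hb
  have h1 : (c * (f ζ - f ((r : ℂ) * ζ))).re ≤ ‖f ζ - f ((r : ℂ) * ζ)‖ := by
    refine (Complex.re_le_norm _).trans ?_
    rw [norm_mul, hcn, one_mul]
  rw [mul_sub, Complex.sub_re, hcf] at h1
  linarith
end
end

section
/- Fix c ≥ 0 and define μ(r) = (c(1−r²)/(8r²))·[(1+r²)/(1−r²) − ((1−r²)/(2r))·log((1+r)/(1−r))] for r ∈ (0,1). Then μ is decreasing on (0,1), c/4 ≤ μ(r) ≤ c/3 for all r ∈ (0,1), lim_{r→0⁺} μ(r) = c/3, and lim_{r→1⁻} μ(r) = c/4. -/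
open Metric MeasureTheory Set Filter

noncomputable section

theorem key_series (r : ℝ) (h0 : 0 < r) (h1 : r < 1) :
    HasSum (fun k : ℕ => r ^ (2 * k) / ((2 * k + 5) * (2 * k + 3) * (2 * k + 1)))
      ((1 / 3 - mu 1 r) / r ^ 2) := by
  have H := Real.hasSum_log_sub_log_of_abs_lt_one (x := r) (by rw [abs_of_pos h0]; exact h1)
  have H1 := (hasSum_nat_add_iff' 1).mpr H
  have H2 := (hasSum_nat_add_iff' 2).mpr H
  have H3 := (((H2.sub (H1.mul_left (2 * r ^ 2))).add (H.mul_left (r ^ 4)))).mul_left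
    (1 / (16 * r ^ 5))
  have hr : r ≠ 0 := h0.ne'
  have h2 : (1 - r ^ 2) ≠ 0 := by nlinarith
  convert H3 using 1
  · rfl
  · funext k
    have a1 : (2 * (k:ℝ) + 1) ≠ 0 := by positivity
    have a2 : (2 * (k:ℝ) + 3) ≠ 0 := by positivity
    have a3 : (2 * (k:ℝ) + 5) ≠ 0 := by positivity
    have e1 : (2 * ((k:ℝ) + 1) + 1) = 2 * k + 3 := by ring
    have e2 : (2 * ((k:ℝ) + 2) + 1) = 2 * k + 5 := by ring
    push_cast
    rw [e1, e2]
    have p1 : r ^ (2 * (k + 2) + 1) = r ^ (2 * k) * r ^ 5 := by ring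
    have p2 : r ^ (2 * (k + 1) + 1) = r ^ (2 * k) * r ^ 3 := by ring
    have p3 : r ^ (2 * k + 1) = r ^ (2 * k) * r := by ring
    rw [p1, p2, p3]
    generalize r ^ (2 * k) = y
    field_simp
    ring
  · unfold mu
    rw [Real.log_div (by linarith) (by linarith)]
    generalize Real.log (1 + r) - Real.log (1 - r) = L
    simp only [Finset.sum_range_succ, Finset.sum_range_zero]
    push_cast
    field_simp
    ring

theorem mu_eq (c r : ℝ) : mu c r = c * mu 1 r := by unfold mu; ring

theorem T_nonneg (r : ℝ) (h0 : 0 < r) (h1 : r < 1) : 0 ≤ (1 / 3 - mu 1 r) / r ^ 2 :=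
  (key_series r h0 h1).nonneg (fun k => by positivity)

theorem T_mono (r s : ℝ) (h0 : 0 < r) (h : r ≤ s) (h1 : s < 1) :
    (1 / 3 - mu 1 r) / r ^ 2 ≤ (1 / 3 - mu 1 s) / s ^ 2 :=
  hasSum_le (fun k => by gcongr) (key_series r h0 (by linarith)) (key_series s (by linarith) h1)

theorem mu_form (r : ℝ) (h0 : 0 < r) : mu 1 r = 1 / 3 - r ^ 2 * ((1 / 3 - mu 1 r) / r ^ 2) := by
  field_simp
  ring

theorem mu_anti : AntitoneOn (mu 1) (Set.Ioo 0 1) := by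
  intro r hr s hs h
  rw [mu_form r hr.1, mu_form s hs.1]
  have := T_mono r s hr.1 h hs.2
  have := T_nonneg r hr.1 hr.2
  have := hr.1
  gcongr

theorem mu_le (r : ℝ) (h0 : 0 < r) (h1 : r < 1) : mu 1 r ≤ 1 / 3 := by
  rw [mu_form r h0]
  have := mul_nonneg (sq_nonneg r) (T_nonneg r h0 h1)
  linarith

theorem mu_lim0 : Tendsto (mu 1) (nhdsWithin 0 (Set.Ioi 0)) (nhds (1 / 3)) := by
  have hl : Tendsto (fun r : ℝ => 1 / 3 - r ^ 2 * ((1 / 3 - mu 1 (1/2)) / (1/2) ^ 2))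
      (nhdsWithin 0 (Set.Ioi 0)) (nhds (1 / 3)) := by
    refine tendsto_nhdsWithin_of_tendsto_nhds (Continuous.tendsto' (by fun_prop) _ _ (by simp))
  have hm : Set.Ioo (0:ℝ) (1/2) ∈ nhdsWithin (0:ℝ) (Set.Ioi 0) := Ioo_mem_nhdsGT (by norm_num)
  refine tendsto_of_tendsto_of_tendsto_of_le_of_le' hl tendsto_const_nhds ?_ ?_
  · filter_upwards [hm] with r hr
    have h := T_mono r (1/2) hr.1 hr.2.le (by norm_num)
    have h' := mul_le_mul_of_nonneg_left h (sq_nonneg r)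
    have := mu_form r hr.1
    linarith
  · filter_upwards [hm] with r hr
    exact mu_le r hr.1 (by linarith [hr.2])

theorem mu_lim1 : Tendsto (mu 1) (nhdsWithin 1 (Set.Iio 1)) (nhds (1 / 4)) := by
  have hg : Tendsto (fun r : ℝ => ((1 + r ^ 2) - ((1 - r ^ 2) ^ 2 * Real.log (1 + r)
      - (1 + r) ^ 2 * (1 - r) * ((1 - r) * Real.log (1 - r))) / (2 * r)) / (8 * r ^ 2))
      (nhdsWithin 1 (Set.Iio 1)) (nhds (1 / 4)) := by
    refine tendsto_nhdsWithin_of_tendsto_nhds ?_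
    have hc : Continuous (fun r : ℝ => (1 - r) * Real.log (1 - r)) :=
      Real.continuous_mul_log.comp (by fun_prop : Continuous (fun r : ℝ => 1 - r))
    have : ContinuousAt (fun r : ℝ => ((1 + r ^ 2) - ((1 - r ^ 2) ^ 2 * Real.log (1 + r)
      - (1 + r) ^ 2 * (1 - r) * ((1 - r) * Real.log (1 - r))) / (2 * r)) / (8 * r ^ 2)) 1 := by
      have h1 : ContinuousAt (fun r : ℝ => Real.log (1 + r)) 1 :=
        ContinuousAt.log (by fun_prop) (by norm_num)
      have h2 := hc.continuousAt (x := 1)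
      refine ContinuousAt.div (ContinuousAt.sub (by fun_prop) (ContinuousAt.div
        (ContinuousAt.sub (ContinuousAt.mul (by fun_prop) h1)
          (ContinuousAt.mul (by fun_prop) h2)) (by fun_prop) (by norm_num))) (by fun_prop)
          (by norm_num)
    have h := this.tendsto
    norm_num at h
    norm_num
    exact h
  refine hg.congr' ?_
  have hm : Set.Ioo (0:ℝ) 1 ∈ nhdsWithin (1:ℝ) (Set.Iio 1) := Ioo_mem_nhdsLT (by norm_num)
  filter_upwards [hm] with r hr
  obtain ⟨h0, h1⟩ := hr
  have h2 : (1 - r ^ 2) ≠ 0 := by nlinarith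
  unfold mu
  rw [Real.log_div (by linarith) (by linarith)]
  field_simp
  ring

theorem mu_ge (r : ℝ) (h0 : 0 < r) (h1 : r < 1) : 1 / 4 ≤ mu 1 r := by
  refine le_of_tendsto mu_lim1 ?_
  have hm : Set.Ioo r 1 ∈ nhdsWithin (1:ℝ) (Set.Iio 1) := Ioo_mem_nhdsLT h1
  filter_upwards [hm] with s hs
  exact mu_anti ⟨h0, h1⟩ ⟨h0.trans hs.1, hs.2⟩ hs.1.le

/-- Properties of the function `μ`: decreasing on (0,1), bounds `c/4 ≤ μ ≤ c/3`,
and its limits at the endpoints. -/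
theorem stmt5 (c : ℝ) (hc : 0 ≤ c) :
    AntitoneOn (mu c) (Set.Ioo 0 1) ∧
    (∀ r ∈ Set.Ioo (0:ℝ) 1, c / 4 ≤ mu c r ∧ mu c r ≤ c / 3) ∧
    Filter.Tendsto (mu c) (nhdsWithin 0 (Set.Ioi 0)) (nhds (c / 3)) ∧
    Filter.Tendsto (mu c) (nhdsWithin 1 (Set.Iio 1)) (nhds (c / 4)) := by
  have he : mu c = fun r => c * mu 1 r := funext (mu_eq c)
  rw [he]
  refine ⟨?_, ?_, ?_, ?_⟩
  · intro r hr s hs h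
    exact mul_le_mul_of_nonneg_left (mu_anti hr hs h) hc
  · intro r hr
    have h1 := mul_le_mul_of_nonneg_left (mu_le r hr.1 hr.2) hc
    have h2 := mul_le_mul_of_nonneg_left (mu_ge r hr.1 hr.2) hc
    constructor <;> simp only <;> linarith
  · have := mu_lim0.const_mul c
    rwa [mul_one_div] at this
  · have := mu_lim1.const_mul c
    rwa [mul_one_div] at this
end
end
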